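/- Let m₁ ∈ ℕ, m₂ ∈ ℝ and ℏ ∈ (0,1]. For each multiindex α ∈ ℕⁿ with |α| ≤ m₁, let p_α : ℝⁿ → ℂ be smooth with sup_{q ∈ ℝⁿ} f(r)^{-|γ'|} |∂_r^{γ₀} ∂_θ^{γ'} p_α(q)| < ∞ for every multiindex γ ∈ ℕⁿ, and define the differential operator P u := Σ_{|α| ≤ m₁} p_α(q) (f(r)^{-1} ℏ D_θ)^{α'} (ℏ D_r)^{α₀} u, where D_r := -i∂_r and D_θ := -i∂_θ. Let a ∈ S^{m₂}_f(ℝ^{2n}) and define b(q, p) := Σ_{|α| ≤ m₁} p_α(q) f(r)^{-|α'|} [ (η + ℏ D_θ)^{α'} (ρ + ℏ D_r)^{α₀} a ](q, p). Then b ∈ S^{m₁+m₂}_f(ℝ^{2n}) and P(Op^1_ℏ(a)u) = Op^1_ℏ(b)u for every u ∈ C_c^∞(ℝⁿ). -/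

import Mathlib

open MeasureTheory Finset

noncomputable section

/-- Points of `ℝⁿ` (with `n = d + 1`) split as `q = (r, θ) ∈ ℝ × ℝ^d`. -/
abbrev Q (d : ℕ) : Type := ℝ × (Fin d → ℝ)

/-- The coordinate direction `∂_r`. -/
def eR (d : ℕ) : Q d := ((1 : ℝ), 0)

/-- The coordinate direction `∂_{θ_i}`. -/
def eTh (d : ℕ) (i : Fin d) : Q d := ((0 : ℝ), Pi.single i 1)

/-- Directional derivative of a complex-valued function. -/
def dirD {E : Type*} [NormedAddCommGroup E] [NormedSpace ℝ E]
    (v : E) (g : E → ℂ) : E → ℂ :=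
  fun x => fderiv ℝ g x v

/-- Multiindices `α = (α₀, α')` split as in the paper. -/
abbrev MIdx (d : ℕ) : Type := ℕ × (Fin d → ℕ)

/-- `|α| = α₀ + |α'|`. -/
def deg {d : ℕ} (α : MIdx d) : ℕ := α.1 + ∑ i, α.2 i

/-- `|α'|`, the angular part of a multiindex. -/
def degA {d : ℕ} (α : MIdx d) : ℕ := ∑ i, α.2 i

/-- `∂_q^α` acting on functions on `ℝⁿ = ℝ × ℝ^d`. -/
def mderiv1 {d : ℕ} (α : MIdx d) (g : Q d → ℂ) : Q d → ℂ :=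
  (dirD (eR d))^[α.1] <|
    (List.finRange d).foldr (fun i h => (dirD (eTh d i))^[α.2 i] h) g

/-- `∂_q^α ∂_p^β` acting on functions on phase space. -/
def mderiv2 {d : ℕ} (α β : MIdx d) (g : Q d × Q d → ℂ) : Q d × Q d → ℂ :=
  (dirD ((eR d, 0) : Q d × Q d))^[α.1] <|
  (List.finRange d).foldr (fun i h => (dirD ((eTh d i, 0) : Q d × Q d))^[α.2 i] h) <|
  (dirD (((0 : Q d), eR d) : Q d × Q d))^[β.1] <|
  (List.finRange d).foldr (fun i h => (dirD (((0 : Q d), eTh d i) : Q d × Q d))^[β.2 i] h) g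

/-- `∂_q^α ∂_p^β ∂_{q'}^γ` acting on amplitudes `a(q, p, q')`. -/
def mderiv3 {d : ℕ} (α β γ : MIdx d) (g : Q d × Q d × Q d → ℂ) : Q d × Q d × Q d → ℂ :=
  (dirD ((eR d, 0, 0) : Q d × Q d × Q d))^[α.1] <|
  (List.finRange d).foldr (fun i h => (dirD ((eTh d i, 0, 0) : Q d × Q d × Q d))^[α.2 i] h) <|
  (dirD (((0 : Q d), eR d, 0) : Q d × Q d × Q d))^[β.1] <|
  (List.finRange d).foldr (fun i h => (dirD (((0 : Q d), eTh d i, 0) : Q d × Q d × Q d))^[β.2 i] h) <|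
  (dirD (((0 : Q d), (0 : Q d), eR d) : Q d × Q d × Q d))^[γ.1] <|
  (List.finRange d).foldr (fun i h => (dirD (((0 : Q d), (0 : Q d), eTh d i) : Q d × Q d × Q d))^[γ.2 i] h) g

/-- `⟨p⟩ = (1 + ρ² + |η|²)^{1/2}`. -/
def brP {d : ℕ} (p : Q d) : ℝ := Real.sqrt (1 + p.1 ^ 2 + ∑ i, (p.2 i) ^ 2)

/-- `⟨ρ ⊕ f(r)⁻¹ η⟩` evaluated at a phase-space point. -/
def brF {d : ℕ} (f : ℝ → ℝ) (x : Q d × Q d) : ℝ :=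
  Real.sqrt (1 + x.2.1 ^ 2 + ∑ i, (x.2.2 i / f x.1.1) ^ 2)

/-- The standing assumption on `f : ℝ → [1, ∞)`: smooth, `f ≥ 1`, and all derivatives
of `log f` of order `≥ 1` are bounded. -/
def GoodF (f : ℝ → ℝ) : Prop :=
  ContDiff ℝ (⊤ : ℕ∞) f ∧ (∀ r, 1 ≤ f r) ∧
    ∀ j : ℕ, 1 ≤ j → ∃ C : ℝ, ∀ r, |iteratedDeriv j (fun s => Real.log (f s)) r| ≤ C

/-- Membership in the symbol class `S^m_f(ℝ^{2n})`. -/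
def IsSymbol {d : ℕ} (f : ℝ → ℝ) (m : ℝ) (a : Q d × Q d → ℂ) : Prop :=
  ContDiff ℝ (⊤ : ℕ∞) a ∧
    ∀ α β : MIdx d, ∃ C : ℝ, ∀ x : Q d × Q d,
      ‖mderiv2 α β a x‖ ≤ C * f x.1.1 ^ ((degA α : ℝ) - (degA β : ℝ)) * brF f x ^ (m - (deg β : ℝ))

/-- The finite set of multiindices of length `≤ N`. -/
def idxSet (d N : ℕ) : Finset (MIdx d) :=
  ((Finset.range (N + 1)) ×ˢ Fintype.piFinset fun _ : Fin d => Finset.range (N + 1)).filter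
    fun α => deg α ≤ N

/-- The seminorm `|a|_{S^m_f, N}`. -/
def symNorm {d : ℕ} (f : ℝ → ℝ) (m : ℝ) (N : ℕ) (a : Q d × Q d → ℂ) : ℝ :=
  ∑ α ∈ idxSet d N, ∑ β ∈ idxSet d N,
    if deg α + deg β ≤ N then
      ⨆ x : Q d × Q d,
        f x.1.1 ^ (-(degA α : ℝ) + (degA β : ℝ)) * brF f x ^ (-m + (deg β : ℝ)) *
          ‖mderiv2 α β a x‖
    else 0

/-- `p · q`. -/
def qdot {d : ℕ} (p q : Q d) : ℝ := p.1 * q.1 + ∑ i, p.2 i * q.2 i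

/-- The oscillating factor `e^{i p · v / ℏ}`. -/
def ephase {d : ℕ} (ℏ : ℝ) (p v : Q d) : ℂ :=
  Complex.exp (Complex.I * Complex.ofReal (qdot p v) / Complex.ofReal ℏ)

/-- The quantization `Op^t_ℏ(a)` of a symbol, acting on functions (trivialized half-densities). -/
def Op {d : ℕ} (ℏ t : ℝ) (a : Q d × Q d → ℂ) (u : Q d → ℂ) : Q d → ℂ :=
  fun q => ((2 * Real.pi * ℏ) ^ (d + 1) : ℝ)⁻¹ •
    ∫ p : Q d, ∫ q' : Q d,
      a (t • q + (1 - t) • q', p) * ephase ℏ p (q - q') * u q'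

/-- Membership in `C_c^∞(ℝⁿ)`. -/
def IsCc {d : ℕ} (u : Q d → ℂ) : Prop := ContDiff ℝ (⊤ : ℕ∞) u ∧ HasCompactSupport u

/-- The `L²` inner product `⟨w, v⟩ = ∫ w \bar v`. -/
def l2inner {d : ℕ} (w v : Q d → ℂ) : ℂ := ∫ q : Q d, w q * (starRingEnd ℂ) (v q)

/-- The `L²` norm. -/
def l2norm {d : ℕ} (u : Q d → ℂ) : ℝ := (∫ q : Q d, ‖u q‖ ^ 2) ^ (1 / 2 : ℝ)

/-- `Σ_{|β| ≤ N} sup |∂^β u|`. -/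
def ckNorm {d : ℕ} (N : ℕ) (u : Q d → ℂ) : ℝ :=
  ∑ β ∈ idxSet d N, ⨆ q : Q d, ‖mderiv1 β u q‖

/-- `⟨ρ ⊕ f(tr + (1-t)r')⁻¹ η⟩` evaluated at a point `(q, p, q')`. -/
def brFA {d : ℕ} (f : ℝ → ℝ) (t : ℝ) (x : Q d × Q d × Q d) : ℝ :=
  Real.sqrt (1 + x.2.1.1 ^ 2 + ∑ i, (x.2.1.2 i / f (t * x.1.1 + (1 - t) * x.2.2.1)) ^ 2)

/-- Membership in the amplitude class `BS^m_{f,t}(ℝ^{3n})`. -/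
def IsAmp {d : ℕ} (f : ℝ → ℝ) (m t : ℝ) (a : Q d × Q d × Q d → ℂ) : Prop :=
  ContDiff ℝ (⊤ : ℕ∞) a ∧
    ∀ α β γ : MIdx d, ∃ C : ℝ, ∀ x : Q d × Q d × Q d,
      ‖mderiv3 α β γ a x‖ ≤
        C * f (t * x.1.1 + (1 - t) * x.2.2.1) ^ ((degA α : ℝ) - (degA β : ℝ) + (degA γ : ℝ)) *
          brFA f t x ^ (m - (deg β : ℝ))

/-- The seminorm `|a|_{BS^m_{f,t}, N}`. -/
def ampNorm {d : ℕ} (f : ℝ → ℝ) (m t : ℝ) (N : ℕ) (a : Q d × Q d × Q d → ℂ) : ℝ :=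
  ∑ α ∈ idxSet d N, ∑ β ∈ idxSet d N, ∑ γ ∈ idxSet d N,
    if deg α + deg β + deg γ ≤ N then
      ⨆ x : Q d × Q d × Q d,
        f (t * x.1.1 + (1 - t) * x.2.2.1) ^ (-(degA α : ℝ) + (degA β : ℝ) - (degA γ : ℝ)) *
          brFA f t x ^ (-m + (deg β : ℝ)) * ‖mderiv3 α β γ a x‖
    else 0

/-- The quantization of an amplitude `a(q, p, q')`. -/
def OpAmp {d : ℕ} (ℏ : ℝ) (a : Q d × Q d × Q d → ℂ) (u : Q d → ℂ) : Q d → ℂ :=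
  fun q => ((2 * Real.pi * ℏ) ^ (d + 1) : ℝ)⁻¹ •
    ∫ p : Q d, ∫ q' : Q d, a (q, p, q') * ephase ℏ p (q - q') * u q'


/-- `ℏ D_r = -iℏ ∂_r`. -/
def hbarDr (d : ℕ) (ℏ : ℝ) (g : Q d → ℂ) : Q d → ℂ :=
  fun q => (ℏ : ℂ) * (-Complex.I) * dirD (eR d) g q

/-- `f(r)⁻¹ ℏ D_{θ_i}`. -/
def hbarDθ (d : ℕ) (f : ℝ → ℝ) (ℏ : ℝ) (i : Fin d) (g : Q d → ℂ) : Q d → ℂ :=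
  fun q => (Complex.ofReal (f q.1))⁻¹ * (ℏ : ℂ) * (-Complex.I) * dirD (eTh d i) g q

/-- The differential operator `P u = Σ_{|α| ≤ m₁} p_α (f(r)⁻¹ ℏ D_θ)^{α'} (ℏ D_r)^{α₀} u`. -/
def diffOp (d : ℕ) (f : ℝ → ℝ) (ℏ : ℝ) (m₁ : ℕ) (pc : MIdx d → Q d → ℂ)
    (u : Q d → ℂ) : Q d → ℂ :=
  fun q => ∑ α ∈ idxSet d m₁,
    pc α q * ((List.finRange d).foldr (fun i h => (hbarDθ d f ℏ i)^[α.2 i] h)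
      ((hbarDr d ℏ)^[α.1] u)) q

/-- `ρ + ℏ D_r` acting on symbols (in the `q`-slot). -/
def rhoAdd (d : ℕ) (ℏ : ℝ) (g : Q d × Q d → ℂ) : Q d × Q d → ℂ :=
  fun x => Complex.ofReal x.2.1 * g x +
    (ℏ : ℂ) * (-Complex.I) * dirD ((eR d, 0) : Q d × Q d) g x

/-- `η_i + ℏ D_{θ_i}` acting on symbols (in the `q`-slot). -/
def etaAdd (d : ℕ) (ℏ : ℝ) (i : Fin d) (g : Q d × Q d → ℂ) : Q d × Q d → ℂ :=
  fun x => Complex.ofReal (x.2.2 i) * g x +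
    (ℏ : ℂ) * (-Complex.I) * dirD ((eTh d i, 0) : Q d × Q d) g x

/-- The symbol `b(q,p) = Σ_α p_α(q) f(r)^{-|α'|} ((η + ℏD_θ)^{α'} (ρ + ℏD_r)^{α₀} a)(q,p)`. -/
def symbOfDiff (d : ℕ) (f : ℝ → ℝ) (ℏ : ℝ) (m₁ : ℕ) (pc : MIdx d → Q d → ℂ)
    (a : Q d × Q d → ℂ) : Q d × Q d → ℂ :=
  fun x => ∑ α ∈ idxSet d m₁,
    pc α x.1 * (Complex.ofReal (f x.1.1 ^ degA α))⁻¹ *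
      ((List.finRange d).foldr (fun i h => (etaAdd d ℏ i)^[α.2 i] h)
        ((rhoAdd d ℏ)^[α.1] a)) x

/-!
Conjugating by the plane wave turns derivatives into multiplications plus derivatives:
`e^{-ip·q/ℏ} ℏD_j e^{ip·q/ℏ} = p_j + ℏD_j`, where `p_j + ℏD_j` acts on functions of `(q, p)` in
the `q`-slot. Up to a constant, `Op ℏ 1 a u` is the integral over `p` of `a(q, p) e^{ip·q/ℏ}`
against the semiclassical Fourier transform of `u`, which decays rapidly, while `a` grows at most
polynomially in `p`, locally uniformly in `q`. Hence `ℏD_j` passes under the integral and maps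
`Op ℏ 1 a u` to `Op ℏ 1 ((p_j + ℏD_j) a) u`; the factors `f(r)⁻¹` come out of the angular
derivatives because they depend on `r` alone.

All symbol classes are instances of one notion: functions whose iterated derivatives along vectors
`v i` are bounded by a weight times a product of scales `σ i`. Weights multiply under products,
`p_j + ℏD_j` multiplies the weight by `⟨ρ ⊕ f(r)⁻¹η⟩` and, for angular `j`, by `f(r)`, and `f⁻¹` is
a symbol of weight `f⁻¹` because its logarithmic derivative is `-∂_r log f`, bounded to all orders.
-/

open Asymptotics Filter Topology
open scoped ContDiff

section DirectionalDerivative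

variable {E F : Type*} [NormedAddCommGroup E] [NormedSpace ℝ E]
  [NormedAddCommGroup F] [NormedSpace ℝ F] {g h : E → ℂ}

lemma contDiff_dirD (v : E) (hg : ContDiff ℝ ∞ g) : ContDiff ℝ ∞ (dirD v g) :=
  (hg.fderiv_right (m := ∞) (by norm_cast)).clm_apply contDiff_const

lemma dirD_zero_left (g : E → ℂ) : dirD 0 g = 0 :=
  funext fun x => (fderiv ℝ g x).map_zero

lemma dirD_const (v : E) (c : ℂ) : dirD v (fun _ => c) = 0 := by
  funext x
  simp [dirD]

lemma dirD_add (v : E) (hg : Differentiable ℝ g) (hh : Differentiable ℝ h) :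
    dirD v (g + h) = dirD v g + dirD v h := by
  funext x
  simp [dirD, fderiv_add (hg x) (hh x)]

lemma dirD_const_smul (v : E) (c : ℂ) (g : E → ℂ) : dirD v (c • g) = c • dirD v g := by
  funext x
  simp [dirD, fderiv_const_smul_field]

lemma dirD_mul (v : E) (hg : Differentiable ℝ g) (hh : Differentiable ℝ h) :
    dirD v (g * h) = g * dirD v h + dirD v g * h := by
  funext x
  simp [dirD, fderiv_mul (hg x) (hh x), mul_comm]

lemma dirD_comp_clm (v : E) (L : E →L[ℝ] F) {g : F → ℂ} (hg : Differentiable ℝ g) :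
    dirD v (g ∘ L) = dirD (L v) g ∘ L := by
  funext x
  simp [dirD, fderiv_comp x (hg (L x)) L.differentiableAt]

lemma dirD_ofReal_clm (v : E) (L : E →L[ℝ] ℝ) :
    dirD v (fun x => (L x : ℂ)) = fun _ => (L v : ℂ) := by
  funext x
  exact congrArg (· v) (Complex.ofRealCLM.comp L).fderiv

lemma dirD_dirD (v w : E) (hg : ContDiff ℝ ∞ g) (x : E) :
    dirD v (dirD w g) x = fderiv ℝ (fderiv ℝ g) x v w := by
  have hg' : Differentiable ℝ (fderiv ℝ g) :=
    (hg.fderiv_right (m := ∞) (by norm_cast)).differentiable (by simp)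
  change fderiv ℝ (fun y => fderiv ℝ g y w) x v = _
  simp [fderiv_clm_apply (hg' x) (differentiableAt_const w)]

lemma dirD_comm (v w : E) (hg : ContDiff ℝ ∞ g) : dirD v (dirD w g) = dirD w (dirD v g) := by
  funext x
  rw [dirD_dirD v w hg, dirD_dirD w v hg]
  exact (hg.contDiffAt.isSymmSndFDerivAt (by simp; norm_cast)).eq v w

end DirectionalDerivative

section Iteration

variable {ι X Y M : Type*}

/-- The composition of the powers `(T i)^[n i]` over a list of indices `i`, the last index acting
first. With commuting `T i` this is the multiindex power `Tⁿ`, and the iterated operators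
in `mderiv1`, `mderiv2`, `diffOp` and `symbOfDiff` are of this form. -/
def iterateAlong (T : ι → X → X) (n : ι → ℕ) (l : List ι) (x : X) : X :=
  l.foldr (fun i => (T i)^[n i]) x

variable {T : ι → X → X} {T' : ι → Y → Y}

lemma iterate_rel [Monoid M] (R : M → X → Y → Prop) {T : X → X} {T' : Y → Y} {τ : M}
    (hT : ∀ m x y, R m x y → R (m * τ) (T x) (T' y)) (k : ℕ) {m : M} {x : X} {y : Y}
    (h : R m x y) : R (m * τ ^ k) (T^[k] x) (T'^[k] y) := by
  induction k with
  | zero => simpa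
  | succ k ih =>
    rw [pow_succ, ← mul_assoc, Function.iterate_succ_apply', Function.iterate_succ_apply']
    exact hT _ _ _ ih

lemma iterateAlong_rel [CommMonoid M] (R : M → X → Y → Prop) {τ : ι → M}
    (hT : ∀ i m x y, R m x y → R (m * τ i) (T i x) (T' i y)) (n : ι → ℕ) (l : List ι)
    {m : M} {x : X} {y : Y} (h : R m x y) :
    R (m * (l.map fun i => τ i ^ n i).prod) (iterateAlong T n l x) (iterateAlong T' n l y) := by
  induction l with
  | nil => simpa [iterateAlong]
  | cons i l ih =>
    rw [List.map_cons, List.prod_cons, mul_left_comm, mul_comm]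
    exact iterate_rel R (hT i) (n i) ih

lemma iterateAlong_congr {n n' : ι → ℕ} {l : List ι} (h : ∀ i ∈ l, n i = n' i) (x : X) :
    iterateAlong T n l x = iterateAlong T n' l x :=
  List.foldr_ext _ _ _ fun i hi _ => by rw [h i hi]

lemma iterateAlong_zero (l : List ι) (x : X) : iterateAlong T 0 l x = x := by
  induction l with
  | nil => rfl
  | cons _ _ ih => exact ih

lemma prod_map_pow_add_single [CommMonoid M] [DecidableEq ι] (τ : ι → M) (n : ι → ℕ) {l : List ι}
    (hl : l.Nodup) {i : ι} (hi : i ∈ l) :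
    (l.map fun j => τ j ^ (n + Pi.single i 1 : ι → ℕ) j).prod =
      τ i * (l.map fun j => τ j ^ n j).prod := by
  have hsingle : (l.map fun j => τ j ^ (Pi.single i 1 : ι → ℕ) j).prod = τ i := by
    rw [List.prod_map_eq_pow_single i _ fun j hj _ => by simp [hj],
      List.count_eq_one_of_mem hl hi]
    simp
  simp only [Pi.add_apply, pow_add, List.prod_map_mul, hsingle, mul_comm]

variable {E : Type*} [NormedAddCommGroup E] [NormedSpace ℝ E] {g : E → ℂ}

lemma dirD_iterateAlong (v : ι → E) (w : E) (n : ι → ℕ) (l : List ι) (hg : ContDiff ℝ ∞ g) :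
    ContDiff ℝ ∞ (iterateAlong (fun i => dirD (v i)) n l g) ∧
      dirD w (iterateAlong (fun i => dirD (v i)) n l g) =
        iterateAlong (fun i => dirD (v i)) n l (dirD w g) :=
  iterateAlong_rel (M := Unit) (τ := 1) (fun _ g h => ContDiff ℝ ∞ g ∧ dirD w g = h)
    (fun i _ _ _ h => ⟨contDiff_dirD (v i) h.1, by rw [← h.2, dirD_comm w (v i) h.1]⟩)
    n l (m := 1) ⟨hg, rfl⟩

lemma iterateAlong_dirD_add_single [DecidableEq ι] (v : ι → E) (n : ι → ℕ) {l : List ι}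
    (hl : l.Nodup) {i : ι} (hi : i ∈ l) (hg : ContDiff ℝ ∞ g) :
    iterateAlong (fun i => dirD (v i)) (n + Pi.single i 1) l g =
      iterateAlong (fun i => dirD (v i)) n l (dirD (v i) g) := by
  induction l with
  | nil => simp at hi
  | cons j l ih =>
    obtain ⟨hj, hl⟩ := List.nodup_cons.1 hl
    change (dirD (v j))^[_] (iterateAlong _ _ l _) = (dirD (v j))^[_] (iterateAlong _ _ l _)
    obtain rfl | hij := eq_or_ne i j
    · have hn : ∀ k ∈ l, (n + Pi.single i 1 : ι → ℕ) k = n k := fun k hk => by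
        simp [ne_of_mem_of_not_mem hk hj]
      rw [iterateAlong_congr hn, ← (dirD_iterateAlong v (v i) n l hg).2, Pi.add_apply,
        Pi.single_eq_same, Function.iterate_succ_apply]
    · rw [ih hl (List.mem_of_ne_of_mem hij hi)]
      simp [hij.symm]

end Iteration

section SymbolClass

variable {ι E : Type*} [NormedAddCommGroup E] [NormedSpace ℝ E]

/-- The iterated derivative of `g` along a list of directions, the head of the list first. -/
def iterDirD (v : ι → E) (l : List ι) (g : E → ℂ) : E → ℂ :=
  l.foldl (fun h i => dirD (v i) h) g

variable {v : ι → E} {σ : ι → E → ℝ} {w w' : E → ℝ} {g h : E → ℂ}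

lemma iterDirD_add (v : ι → E) (l : List ι) (hg : ContDiff ℝ ∞ g) (hh : ContDiff ℝ ∞ h) :
    iterDirD v l (g + h) = iterDirD v l g + iterDirD v l h := by
  induction l generalizing g h with
  | nil => rfl
  | cons i l ih =>
    have hadd := dirD_add (v i) (hg.differentiable (by simp)) (hh.differentiable (by simp))
    exact (congrArg (iterDirD v l) hadd).trans
      (ih (contDiff_dirD (v i) hg) (contDiff_dirD (v i) hh))

lemma iterDirD_const_smul (v : ι → E) (l : List ι) (c : ℂ) (g : E → ℂ) :
    iterDirD v l (c • g) = c • iterDirD v l g := by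
  induction l generalizing g with
  | nil => rfl
  | cons i l ih =>
    exact (congrArg (iterDirD v l) (dirD_const_smul (v i) c g)).trans (ih (dirD (v i) g))

/-- The symbol class `S(w)` of the weight `w`: smooth functions which are `O(w)` and for which each
derivative in the direction `v i` costs a factor `σ i`, uniformly on `E`. -/
def symbolClass (v : ι → E) (σ : ι → E → ℝ) (w : E → ℝ) : Submodule ℂ (E → ℂ) where
  carrier := {g | ContDiff ℝ ∞ g ∧ ∀ l : List ι, iterDirD v l g =O[⊤] (w * (l.map σ).prod)}
  add_mem' hg hh := ⟨hg.1.add hh.1, fun l => by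
    rw [iterDirD_add v l hg.1 hh.1]
    exact (hg.2 l).add (hh.2 l)⟩
  zero_mem' := ⟨contDiff_const, fun l => by
    rw [← zero_smul ℂ 0, iterDirD_const_smul, zero_smul]
    exact isBigO_zero _ _⟩
  smul_mem' c g hg := ⟨contDiff_const.smul hg.1, fun l => by
    rw [iterDirD_const_smul]
    exact (hg.2 l).const_smul_left c⟩

lemma contDiff_of_mem_symbolClass (hg : g ∈ symbolClass v σ w) : ContDiff ℝ ∞ g :=
  hg.1

lemma isBigO_of_mem_symbolClass (hg : g ∈ symbolClass v σ w) : g =O[⊤] w := by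
  simpa [iterDirD] using hg.2 []

lemma dirD_mem_symbolClass (hg : g ∈ symbolClass v σ w) (i : ι) :
    dirD (v i) g ∈ symbolClass v σ (w * σ i) :=
  ⟨contDiff_dirD (v i) hg.1, fun l => by
    simpa [iterDirD, mul_assoc] using hg.2 (i :: l)⟩

lemma mem_symbolClass_of_invariant (P : (E → ℝ) → (E → ℂ) → Prop)
    (hbound : ∀ w g, P w g → ContDiff ℝ ∞ g ∧ g =O[⊤] w)
    (hderiv : ∀ w g, P w g → ∀ i, P (w * σ i) (dirD (v i) g)) (hg : P w g) :
    g ∈ symbolClass v σ w := by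
  refine ⟨(hbound w g hg).1, fun l => ?_⟩
  induction l generalizing w g with
  | nil => simpa [iterDirD] using (hbound w g hg).2
  | cons i l ih => simpa [iterDirD, mul_assoc] using ih (hderiv w g hg i)

lemma mem_symbolClass_of_dirD_mem (hg : ContDiff ℝ ∞ g) (hgw : g =O[⊤] w)
    (hderiv : ∀ i, dirD (v i) g ∈ symbolClass v σ (w * σ i)) : g ∈ symbolClass v σ w := by
  refine ⟨hg, fun l => ?_⟩
  cases l with
  | nil => simpa [iterDirD] using hgw
  | cons i l => simpa [iterDirD, mul_assoc] using (hderiv i).2 l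

lemma symbolClass_mono (hw : w =O[⊤] w') : symbolClass v σ w ≤ symbolClass v σ w' :=
  fun _ hg => ⟨hg.1, fun l => (hg.2 l).trans (hw.mul (isBigO_refl _ _))⟩

lemma const_mem_symbolClass (c : ℂ) : (fun _ => c) ∈ symbolClass v σ 1 :=
  mem_symbolClass_of_dirD_mem contDiff_const (isBigO_const_const c one_ne_zero ⊤) fun i => by
    rw [dirD_const]
    exact zero_mem _

lemma mul_mem_symbolClass (hg : g ∈ symbolClass v σ w) (hh : h ∈ symbolClass v σ w') :
    g * h ∈ symbolClass v σ (w * w') := by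
  refine ⟨hg.1.mul hh.1, fun l => ?_⟩
  induction l generalizing g h w w' with
  | nil =>
    simpa [iterDirD] using (isBigO_of_mem_symbolClass hg).mul (isBigO_of_mem_symbolClass hh)
  | cons i l ih =>
    have hg' := dirD_mem_symbolClass hg i
    have hh' := dirD_mem_symbolClass hh i
    have hleibniz : iterDirD v (i :: l) (g * h) =
        iterDirD v l (g * dirD (v i) h) + iterDirD v l (dirD (v i) g * h) := by
      have hdir := dirD_mul (v i) (hg.1.differentiable (by simp)) (hh.1.differentiable (by simp))
      exact (congrArg (iterDirD v l) hdir).trans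
        (iterDirD_add v l (hg.1.mul hh'.1) (hg'.1.mul hh.1))
    have h₁ := ih hg hh'
    have h₂ := ih hg' hh
    rw [hleibniz, List.map_cons, List.prod_cons, ← mul_assoc]
    rw [← mul_assoc] at h₁
    rw [mul_right_comm w (σ i) w'] at h₂
    exact h₁.add h₂

lemma pow_mem_symbolClass (hg : g ∈ symbolClass v σ w) (k : ℕ) :
    g ^ k ∈ symbolClass v σ (w ^ k) := by
  induction k with
  | zero =>
    rw [pow_zero, pow_zero]
    exact const_mem_symbolClass 1
  | succ k ih => simpa only [pow_succ] using mul_mem_symbolClass ih hg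

lemma mem_symbolClass_of_logDeriv {b : ι → E → ℂ} (hg : ContDiff ℝ ∞ g) (hgw : g =O[⊤] w)
    (hb : ∀ i, b i ∈ symbolClass v σ (σ i)) (hderiv : ∀ i, dirD (v i) g = b i * g) :
    g ∈ symbolClass v σ w := by
  let P : (E → ℝ) → (E → ℂ) → Prop := fun W h => ∃ c W', c ∈ symbolClass v σ W' ∧
    W = W' * w ∧ h = c * g
  refine mem_symbolClass_of_invariant P ?_ ?_
    ⟨1, 1, const_mem_symbolClass 1, (one_mul w).symm, (one_mul g).symm⟩
  · rintro _ _ ⟨c, W, hc, rfl, rfl⟩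
    exact ⟨hc.1.mul hg, (isBigO_of_mem_symbolClass hc).mul hgw⟩
  · rintro _ _ ⟨c, W, hc, rfl, rfl⟩ i
    refine ⟨c * b i + dirD (v i) c, W * σ i,
      add_mem (mul_mem_symbolClass hc (hb i)) (dirD_mem_symbolClass hc i), by ring, ?_⟩
    rw [dirD_mul (v i) (hc.1.differentiable (by simp)) (hg.differentiable (by simp)), hderiv i]
    ring

lemma comp_clm_mem_symbolClass {κ F : Type*} [NormedAddCommGroup F] [NormedSpace ℝ F]
    {v' : κ → F} {σ' : κ → F → ℝ} {w : F → ℝ} {g : F → ℂ} (L : E →L[ℝ] F)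
    (hL : ∀ i, L (v i) = 0 ∨ ∃ j, v' j = L (v i) ∧ σ' j ∘ L = σ i)
    (hg : g ∈ symbolClass v' σ' w) : g ∘ L ∈ symbolClass v σ (w ∘ L) := by
  refine ⟨hg.1.comp L.contDiff, fun l => ?_⟩
  induction l generalizing g w with
  | nil =>
    have hgw := (isBigO_of_mem_symbolClass hg).comp_tendsto (k := L) (l' := ⊤) Filter.tendsto_top
    simpa [iterDirD] using hgw
  | cons i l ih =>
    have hcomp : iterDirD v (i :: l) (g ∘ L) = iterDirD v l (dirD (L (v i)) g ∘ L) :=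
      congrArg (iterDirD v l) (dirD_comp_clm (v i) L (hg.1.differentiable (by simp)))
    rw [hcomp, List.map_cons, List.prod_cons, ← mul_assoc]
    obtain hi | ⟨j, hj, hσ⟩ := hL i
    · rw [hi, dirD_zero_left]
      exact (zero_mem (symbolClass v σ (w ∘ L * σ i))).2 l
    · rw [← hj, ← hσ]
      exact ih (dirD_mem_symbolClass hg j)

lemma iterateAlong_dirD_mem_symbolClass (n : ι → ℕ) (l : List ι) (hg : g ∈ symbolClass v σ w) :
    iterateAlong (fun i => dirD (v i)) n l g ∈
      symbolClass v σ (w * (l.map fun i => σ i ^ n i).prod) :=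
  iterateAlong_rel (T' := fun i => dirD (v i)) (fun w g _ => g ∈ symbolClass v σ w)
    (fun i _ _ _ h => dirD_mem_symbolClass h i) n l (y := g) hg

lemma mem_symbolClass_iff_iterateAlong [Fintype ι] {l : List ι} (hl : l.Nodup)
    (hmem : ∀ i, i ∈ l) : g ∈ symbolClass v σ w ↔ ContDiff ℝ ∞ g ∧ ∀ n : ι → ℕ,
      iterateAlong (fun i => dirD (v i)) n l g =O[⊤] (w * ∏ i, σ i ^ n i) := by
  classical
  have hprod (n : ι → ℕ) : ∏ i, σ i ^ n i = (l.map fun i => σ i ^ n i).prod := by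
    rw [← List.prod_toFinset _ hl,
      Finset.eq_univ_iff_forall.2 fun i => List.mem_toFinset.2 (hmem i)]
  simp only [hprod]
  let P : (E → ℝ) → (E → ℂ) → Prop := fun w g => ContDiff ℝ ∞ g ∧ ∀ n : ι → ℕ,
    iterateAlong (fun i => dirD (v i)) n l g =O[⊤] (w * (l.map fun i => σ i ^ n i).prod)
  refine ⟨fun hg => ⟨hg.1, fun n =>
    isBigO_of_mem_symbolClass (iterateAlong_dirD_mem_symbolClass n l hg)⟩,
    fun hg => mem_symbolClass_of_invariant P ?_ ?_ hg⟩
  · rintro w g ⟨hg, hbound⟩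
    exact ⟨hg, by simpa [iterateAlong_zero] using hbound 0⟩
  · rintro w g ⟨hg, hbound⟩ i
    refine ⟨contDiff_dirD (v i) hg, fun n => ?_⟩
    rw [← iterateAlong_dirD_add_single v n hl (hmem i) hg, mul_assoc,
      ← prod_map_pow_add_single σ n hl (hmem i)]
    exact hbound _

end SymbolClass

section PhaseSpace

variable {d : ℕ} {f : ℝ → ℝ}

/-- The coordinates of `Q d`: `inl ()` is `r` and `inr i` is `θ_i`. -/
abbrev Coord (d : ℕ) : Type := Unit ⊕ Fin d

/-- The list of all coordinates, ordered as the factors of `mderiv1`. -/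
def coordList (d : ℕ) : List (Coord d) :=
  Sum.inl () :: (List.finRange d).map Sum.inr

/-- The list of all phase-space coordinates, ordered as the factors of `mderiv2`. -/
def phaseList (d : ℕ) : List (Coord d ⊕ Coord d) :=
  (coordList d).map Sum.inl ++ (coordList d).map Sum.inr

/-- The coordinate directions `∂_r` and `∂_{θ_i}`. -/
def coordVec (d : ℕ) : Coord d → Q d :=
  Sum.elim (fun _ => eR d) (eTh d)

/-- The multiindex `α = (α₀, α')` as a function of the coordinate. -/
def MIdx.exponent (α : MIdx d) : Coord d → ℕ :=
  Sum.elim (fun _ => α.1) α.2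

/-- The cost of a derivative in a coordinate direction: `1` for `∂_r` and `f(r)` for `∂_θ`. -/
def coordScale (f : ℝ → ℝ) : Coord d → Q d → ℝ :=
  Sum.elim 1 fun _ q => f q.1

/-- The coordinate directions of phase space, first those of `q` and then those of `p`. -/
def phaseVec (d : ℕ) : Coord d ⊕ Coord d → Q d × Q d :=
  Sum.elim (fun j => (coordVec d j, 0)) fun j => (0, coordVec d j)

/-- The cost of a phase-space derivative in `S^m_f`: that of `coordScale` for a derivative in `q`,
and the factor `(s_j ⟨ρ ⊕ f(r)⁻¹η⟩)⁻¹` for a derivative in the momentum `p_j`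
dual to a coordinate of cost `s_j`. -/
def phaseScale (f : ℝ → ℝ) : Coord d ⊕ Coord d → Q d × Q d → ℝ :=
  Sum.elim (fun j x => coordScale f j x.1) fun j x => (coordScale f j x.1 * brF f x)⁻¹

lemma nodup_coordList (d : ℕ) : (coordList d).Nodup := by
  simp [coordList, List.nodup_map_iff Sum.inr_injective, List.nodup_finRange]

lemma mem_coordList (j : Coord d) : j ∈ coordList d := by
  rcases j with _ | i <;> simp [coordList]

lemma nodup_phaseList (d : ℕ) : (phaseList d).Nodup :=
  List.Nodup.append ((nodup_coordList d).map Sum.inl_injective)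
    ((nodup_coordList d).map Sum.inr_injective) (by simp [List.disjoint_left])

lemma mem_phaseList (j : Coord d ⊕ Coord d) : j ∈ phaseList d := by
  rcases j with j | j <;> simp [phaseList, mem_coordList]

lemma MIdx.exponent_surjective : Function.Surjective (MIdx.exponent (d := d)) := fun n =>
  ⟨(n (Sum.inl ()), fun i => n (Sum.inr i)), funext fun j => by rcases j with _ | i <;> rfl⟩

lemma mderiv1_eq_iterateAlong (α : MIdx d) (g : Q d → ℂ) :
    mderiv1 α g = iterateAlong (fun j => dirD (coordVec d j)) α.exponent (coordList d) g := by
  simp [mderiv1, iterateAlong, coordList, List.foldr_map, coordVec, MIdx.exponent]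

lemma mderiv2_eq_iterateAlong (α β : MIdx d) (g : Q d × Q d → ℂ) :
    mderiv2 α β g = iterateAlong (fun j => dirD (phaseVec d j)) (Sum.elim α.exponent β.exponent)
      (phaseList d) g := by
  simp [mderiv2, phaseList, iterateAlong, coordList, List.foldr_map, coordVec, phaseVec,
    MIdx.exponent]

lemma sum_exponent (α : MIdx d) : ∑ j, α.exponent j = deg α := by
  simp [MIdx.exponent, deg]

lemma prod_coordScale_pow (f : ℝ → ℝ) (α : MIdx d) (q : Q d) :
    ∏ j, coordScale f j q ^ α.exponent j = f q.1 ^ degA α := by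
  simp [coordScale, MIdx.exponent, degA, Finset.prod_pow_eq_pow_sum]

lemma prod_phaseScale_pow (f : ℝ → ℝ) (α β : MIdx d) (x : Q d × Q d) :
    ∏ j, phaseScale f j x ^ (Sum.elim α.exponent β.exponent : Coord d ⊕ Coord d → ℕ) j =
      f x.1.1 ^ degA α * (f x.1.1 ^ degA β * brF f x ^ deg β)⁻¹ := by
  simp only [Fintype.prod_sum_type (α₁ := Coord d), phaseScale, Sum.elim_inl, Sum.elim_inr, inv_pow,
    mul_pow, Finset.prod_inv_distrib, Finset.prod_mul_distrib, prod_coordScale_pow,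
    Finset.prod_pow_eq_pow_sum, sum_exponent]

lemma one_le_brF (f : ℝ → ℝ) (x : Q d × Q d) : 1 ≤ brF f x :=
  Real.one_le_sqrt.2 <| by
    rw [add_assoc]
    exact le_add_of_nonneg_right (by positivity)

lemma isBigO_brF_rpow (f : ℝ → ℝ) {m m' : ℝ} (h : m ≤ m') :
    (fun x : Q d × Q d => brF f x ^ m) =O[⊤] fun x => brF f x ^ m' :=
  isBigO_of_le _ fun x => by
    have hx := one_le_brF f x
    rw [Real.norm_of_nonneg (by positivity), Real.norm_of_nonneg (by positivity)]
    exact Real.rpow_le_rpow_of_exponent_le hx h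

lemma mem_symbolClass_coord_iff {w : Q d → ℝ} {g : Q d → ℂ} :
    g ∈ symbolClass (coordVec d) (coordScale f) w ↔ ContDiff ℝ ∞ g ∧ ∀ γ : MIdx d,
      mderiv1 γ g =O[⊤] fun q => w q * f q.1 ^ degA γ := by
  rw [mem_symbolClass_iff_iterateAlong (nodup_coordList d) mem_coordList,
    MIdx.exponent_surjective.forall]
  simp only [← mderiv1_eq_iterateAlong, ← prod_coordScale_pow, Pi.mul_def, Finset.prod_apply,
    Pi.pow_apply]

lemma mem_symbolClass_phase_iff {w : Q d × Q d → ℝ} {a : Q d × Q d → ℂ} :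
    a ∈ symbolClass (phaseVec d) (phaseScale f) w ↔ ContDiff ℝ ∞ a ∧ ∀ α β : MIdx d,
      mderiv2 α β a =O[⊤] fun x =>
        w x * (f x.1.1 ^ degA α * (f x.1.1 ^ degA β * brF f x ^ deg β)⁻¹) := by
  have hbound (α β : MIdx d) :
      (iterateAlong (fun j => dirD (phaseVec d j)) (Sum.elim α.exponent β.exponent) (phaseList d) a
          =O[⊤] (w * ∏ j, phaseScale f j ^ (Sum.elim α.exponent β.exponent : _ → ℕ) j)) ↔
        mderiv2 α β a =O[⊤] fun x =>
          w x * (f x.1.1 ^ degA α * (f x.1.1 ^ degA β * brF f x ^ deg β)⁻¹) := by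
    simp only [mderiv2_eq_iterateAlong, ← prod_phaseScale_pow, Pi.mul_def, Finset.prod_apply,
      Pi.pow_apply]
  rw [mem_symbolClass_iff_iterateAlong (nodup_phaseList d) mem_phaseList]
  refine and_congr_right' ⟨fun h α β => (hbound α β).1 (h _), fun h n => ?_⟩
  obtain ⟨α, hα⟩ := MIdx.exponent_surjective (n ∘ Sum.inl)
  obtain ⟨β, hβ⟩ := MIdx.exponent_surjective (n ∘ Sum.inr)
  rw [← Sum.elim_comp_inl_inr n, ← hα, ← hβ]
  exact (hbound α β).2 (h α β)

lemma isSymbol_iff_mem_symbolClass (hf : ∀ r, 1 ≤ f r) {m : ℝ} {a : Q d × Q d → ℂ} :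
    IsSymbol f m a ↔ a ∈ symbolClass (phaseVec d) (phaseScale f) fun x => brF f x ^ m := by
  rw [mem_symbolClass_phase_iff]
  refine and_congr_right' (forall₂_congr fun α β => ?_)
  rw [isBigO_top]
  refine exists_congr fun C => forall_congr' fun x => ?_
  have hfx := zero_lt_one.trans_le (hf x.1.1)
  have hbx := zero_lt_one.trans_le (one_le_brF f x)
  rw [Real.norm_of_nonneg (by positivity), Real.rpow_sub hfx, Real.rpow_sub hbx, mul_assoc]
  simp only [Real.rpow_natCast]
  ring_nf

end PhaseSpace

section Symbols

variable {d : ℕ} {f : ℝ → ℝ}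

lemma ofReal_mem_symbolClass_line {h : ℝ → ℝ} (hh : ContDiff ℝ ∞ h)
    (hbound : ∀ j, ∃ C, ∀ r, |iteratedDeriv j h r| ≤ C) :
    (fun r => (h r : ℂ)) ∈ symbolClass (fun _ : Unit => (1 : ℝ)) 1 1 := by
  let P : (ℝ → ℝ) → (ℝ → ℂ) → Prop := fun w g =>
    w = 1 ∧ ∃ j, g = fun r => ((iteratedDeriv j h r : ℝ) : ℂ)
  have hsmooth (j : ℕ) : ContDiff ℝ ∞ (iteratedDeriv j h) :=
    iteratedDeriv_eq_iterate (f := h) (n := j) ▸ hh.iterate_deriv j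
  refine mem_symbolClass_of_invariant P ?_ ?_ ⟨rfl, 0, by simp⟩
  · rintro _ _ ⟨rfl, j, rfl⟩
    refine ⟨Complex.ofRealCLM.contDiff.comp (hsmooth j), isBigO_top.2 ?_⟩
    simpa using hbound j
  · rintro _ _ ⟨rfl, j, rfl⟩ -
    refine ⟨one_mul _, j + 1, funext fun r => ?_⟩
    have hderiv := ((hsmooth j).differentiable (by simp) r).hasDerivAt.ofReal_comp
    rw [iteratedDeriv_succ, dirD, fderiv_eq_smul_deriv, one_smul, hderiv.deriv]

lemma GoodF.inv_mem_symbolClass_line (hf : GoodF f) :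
    (fun r => (f r : ℂ)⁻¹) ∈ symbolClass (fun _ : Unit => (1 : ℝ)) 1 f⁻¹ := by
  have hpos (r : ℝ) : 0 < f r := zero_lt_one.trans_le (hf.2.1 r)
  have hne (r : ℝ) : (f r : ℂ) ≠ 0 := Complex.ofReal_ne_zero.2 (hpos r).ne'
  have hlog : ContDiff ℝ ∞ fun r => Real.log (f r) := hf.1.log fun r => (hpos r).ne'
  have hb : (fun r => ((deriv (fun s => Real.log (f s)) r : ℝ) : ℂ)) ∈
      symbolClass (fun _ : Unit => (1 : ℝ)) 1 1 :=
    ofReal_mem_symbolClass_line (hlog.deriv' (n := ∞)) fun j => by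
      simpa only [iteratedDeriv_succ'] using hf.2.2 (j + 1) (by lia)
  refine mem_symbolClass_of_logDeriv
    ((Complex.ofRealCLM.contDiff.comp hf.1).inv hne) (isBigO_of_le _ fun r => by simp)
    (fun _ => neg_mem hb) fun _ => funext fun r => ?_
  have hfr := (hf.1.differentiable (by simp) r).hasDerivAt
  have hinv := hfr.ofReal_comp.inv (hne r)
  have hlogderiv := (hfr.log (hpos r).ne').deriv
  rw [dirD, fderiv_eq_smul_deriv, one_smul, Pi.mul_apply, Pi.neg_apply, hlogderiv,
    Complex.ofReal_div]
  refine hinv.deriv.trans ?_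
  field_simp [hne r]

/-- The projection of phase space to the radial variable `r`. -/
def radialProj (d : ℕ) : (Q d × Q d) →L[ℝ] ℝ :=
  (ContinuousLinearMap.fst ℝ ℝ (Fin d → ℝ)).comp (ContinuousLinearMap.fst ℝ (Q d) (Q d))

lemma GoodF.inv_pow_mem_symbolClass (hf : GoodF f) (k : ℕ) :
    (fun x : Q d × Q d => ((f x.1.1 ^ k : ℝ) : ℂ)⁻¹) ∈
      symbolClass (phaseVec d) (phaseScale f) fun x => (f x.1.1 ^ k)⁻¹ := by
  have hinv := comp_clm_mem_symbolClass (v := phaseVec d) (σ := phaseScale f) (radialProj d) ?_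
    (pow_mem_symbolClass hf.inv_mem_symbolClass_line k)
  · simpa [Pi.pow_def, Function.comp_def, radialProj] using hinv
  · rintro ((_ | i) | j)
    · exact Or.inr ⟨(), rfl, rfl⟩
    all_goals exact Or.inl rfl

lemma comp_fst_mem_symbolClass {w : Q d → ℝ} {g : Q d → ℂ}
    (hg : g ∈ symbolClass (coordVec d) (coordScale f) w) :
    (fun x => g x.1) ∈ symbolClass (phaseVec d) (phaseScale f) fun x => w x.1 := by
  refine comp_clm_mem_symbolClass (ContinuousLinearMap.fst ℝ (Q d) (Q d)) ?_ hg
  rintro (j | j)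
  · exact Or.inr ⟨j, rfl, rfl⟩
  · exact Or.inl rfl

/-- The pairing `qdot` as a continuous bilinear form. -/
def qdotCLM (d : ℕ) : Q d →L[ℝ] Q d →L[ℝ] ℝ :=
  let r := ContinuousLinearMap.fst ℝ ℝ (Fin d → ℝ)
  let θ i := (ContinuousLinearMap.proj (R := ℝ) (φ := fun _ : Fin d => ℝ) i).comp
    (ContinuousLinearMap.snd ℝ ℝ (Fin d → ℝ))
  (ContinuousLinearMap.mul ℝ ℝ).bilinearComp r r +
    ∑ i, (ContinuousLinearMap.mul ℝ ℝ).bilinearComp (θ i) (θ i)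

lemma qdotCLM_apply (p q : Q d) : qdotCLM d p q = qdot p q := by
  simp [qdotCLM, qdot]

lemma qdot_comm (p q : Q d) : qdot p q = qdot q p := by
  simp only [qdot, mul_comm]

lemma qdot_eR (p : Q d) : qdot p (eR d) = p.1 := by
  simp [qdot, eR]

lemma qdot_eTh (p : Q d) (i : Fin d) : qdot p (eTh d i) = p.2 i := by
  simp [qdot, eTh, Pi.single_apply]

lemma qdot_coordVec (j k : Coord d) :
    qdot (coordVec d j) (coordVec d k) = if j = k then 1 else 0 := by
  rcases k with _ | k <;> rcases j with _ | j <;> simp only [coordVec, Sum.elim_inl, Sum.elim_inr,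
    qdot_eR, qdot_eTh] <;> simp [eR, eTh, Pi.single_apply, eq_comm]

lemma one_le_coordScale (hf : ∀ r, 1 ≤ f r) (j : Coord d) (q : Q d) : 1 ≤ coordScale f j q := by
  rcases j with _ | _
  · exact le_rfl
  · exact hf q.1

lemma abs_qdot_coordVec_le (hf : ∀ r, 1 ≤ f r) (j : Coord d) (x : Q d × Q d) :
    |qdot x.2 (coordVec d j)| ≤ coordScale f j x.1 * brF f x := by
  have hsum : 0 ≤ ∑ i, (x.2.2 i / f x.1.1) ^ 2 := by positivity
  rcases j with _ | i
  · simp only [coordVec, coordScale, Sum.elim_inl, qdot_eR, Pi.one_apply, one_mul]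
    exact Real.abs_le_sqrt (by linarith)
  · have hfx := zero_lt_one.trans_le (hf x.1.1)
    have hi := Finset.single_le_sum (fun k _ => sq_nonneg (x.2.2 k / f x.1.1)) (Finset.mem_univ i)
    have hle : |x.2.2 i / f x.1.1| ≤ brF f x :=
      Real.abs_le_sqrt (by linarith [sq_nonneg x.2.1])
    rw [abs_div, abs_of_pos hfx, div_le_iff₀' hfx] at hle
    simpa only [coordVec, coordScale, Sum.elim_inr, qdot_eTh] using hle

lemma momentum_mem_symbolClass (hf : ∀ r, 1 ≤ f r) (j : Coord d) :
    (fun x : Q d × Q d => (qdot x.2 (coordVec d j) : ℂ)) ∈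
      symbolClass (phaseVec d) (phaseScale f) fun x => coordScale f j x.1 * brF f x := by
  let L := (qdotCLM d (coordVec d j)).comp (ContinuousLinearMap.snd ℝ (Q d) (Q d))
  have hL (x : Q d × Q d) : qdot x.2 (coordVec d j) = L x := by
    simp [L, qdotCLM_apply, qdot_comm]
  have hbound (x : Q d × Q d) := abs_qdot_coordVec_le hf j x
  simp only [hL] at hbound ⊢
  refine mem_symbolClass_of_dirD_mem (Complex.ofRealCLM.contDiff.comp L.contDiff)
    (isBigO_of_le _ fun x => ?_) fun k => ?_
  · rw [Complex.norm_real, Real.norm_eq_abs]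
    exact (hbound x).trans (le_abs_self _)
  rw [dirD_ofReal_clm]
  obtain rfl | hk := eq_or_ne k (Sum.inr j)
  · have hLj : L (phaseVec d (Sum.inr j)) = 1 := by
      simp [← hL, phaseVec, qdot_coordVec]
    have hweight : ((fun x => coordScale f j x.1 * brF f x) * phaseScale f (Sum.inr j)) = 1 := by
      funext x
      have hs := zero_lt_one.trans_le (one_le_coordScale hf j x.1)
      have hb := zero_lt_one.trans_le (one_le_brF f x)
      exact mul_inv_cancel₀ (mul_pos hs hb).ne'
    rw [hLj, hweight]
    exact const_mem_symbolClass _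
  · have hLk : L (phaseVec d k) = 0 := by
      rcases k with k | k
      · simp [← hL, phaseVec, qdot]
      · have hkj : k ≠ j := fun h => hk (by rw [h])
        simp [← hL, phaseVec, qdot_coordVec, hkj]
    simp only [hLk, Complex.ofReal_zero]
    exact zero_mem _

/-- The operator `p·w + ℏ D_w` acting on symbols in the `q`-slot: the conjugate of the derivative
`ℏ D_w` in `q` by `e^{ip·q/ℏ}`. -/
def conjD (ℏ : ℝ) (w : Q d) (a : Q d × Q d → ℂ) : Q d × Q d → ℂ :=
  fun x => (qdot x.2 w : ℂ) * a x + (ℏ : ℂ) * (-Complex.I) * dirD (w, 0) a x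

lemma conjD_mem_symbolClass (hf : ∀ r, 1 ≤ f r) (ℏ : ℝ) (j : Coord d) {w : Q d × Q d → ℝ}
    {a : Q d × Q d → ℂ} (ha : a ∈ symbolClass (phaseVec d) (phaseScale f) w) :
    conjD ℏ (coordVec d j) a ∈ symbolClass (phaseVec d) (phaseScale f)
      (w * fun x => coordScale f j x.1 * brF f x) := by
  have hmul := mul_mem_symbolClass ha (momentum_mem_symbolClass hf j)
  have hderiv := dirD_mem_symbolClass ha (Sum.inl j)
  have hscale : (w * phaseScale f (Sum.inl j)) =O[⊤]
      (w * fun x => coordScale f j x.1 * brF f x) := by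
    refine (isBigO_refl w ⊤).mul (isBigO_of_le _ fun x => ?_)
    have hs := zero_lt_one.trans_le (one_le_coordScale hf j x.1)
    have hb := one_le_brF f x
    simp only [phaseScale, Sum.elim_inl]
    rw [Real.norm_of_nonneg hs.le, Real.norm_of_nonneg (by positivity)]
    exact le_mul_of_one_le_right hs.le hb
  have hconj : conjD ℏ (coordVec d j) a =
      a * (fun x => (qdot x.2 (coordVec d j) : ℂ)) +
        ((ℏ : ℂ) * (-Complex.I)) • dirD (phaseVec d (Sum.inl j)) a := by
    funext x
    simp [conjD, phaseVec, mul_comm]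
  rw [hconj]
  exact add_mem hmul (Submodule.smul_mem _ _ (symbolClass_mono hscale hderiv))

/-- The list of all coordinates in the order of the factors of `diffOp` and `symbOfDiff`:
the operator in `r` acts first. -/
def operatorList (d : ℕ) : List (Coord d) :=
  (List.finRange d).map Sum.inr ++ [Sum.inl ()]

lemma prod_map_operatorList {M : Type*} [CommMonoid M] (F : Coord d → M) :
    ((operatorList d).map F).prod = ∏ j, F j := by
  simp [operatorList, Function.comp_def, ← List.ofFn_eq_map, List.prod_ofFn, mul_comm]

lemma symbOfDiff_eq_sum (f : ℝ → ℝ) (ℏ : ℝ) (m₁ : ℕ) (pc : MIdx d → Q d → ℂ)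
    (a : Q d × Q d → ℂ) : symbOfDiff d f ℏ m₁ pc a = ∑ α ∈ idxSet d m₁,
      (fun x => pc α x.1) * (fun x => ((f x.1.1 ^ degA α : ℝ) : ℂ)⁻¹) *
        iterateAlong (fun j => conjD ℏ (coordVec d j)) α.exponent (operatorList d) a := by
  have hr : rhoAdd d ℏ = conjD ℏ (eR d) := by
    funext g x
    simp [rhoAdd, conjD, qdot_eR]
  have hθ (i : Fin d) : etaAdd d ℏ i = conjD ℏ (eTh d i) := by
    funext g x
    simp [etaAdd, conjD, qdot_eTh]
  funext x
  simp [symbOfDiff, hr, hθ, iterateAlong, operatorList, List.foldr_map, coordVec, MIdx.exponent]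

lemma iterateAlong_conjD_mem_symbolClass (hf : ∀ r, 1 ≤ f r) (ℏ : ℝ) (α : MIdx d)
    {w : Q d × Q d → ℝ} {a : Q d × Q d → ℂ}
    (ha : a ∈ symbolClass (phaseVec d) (phaseScale f) w) :
    iterateAlong (fun j => conjD ℏ (coordVec d j)) α.exponent (operatorList d) a ∈
      symbolClass (phaseVec d) (phaseScale f)
        (w * fun x => f x.1.1 ^ degA α * brF f x ^ deg α) := by
  have hmem := iterateAlong_rel (T' := fun j => conjD ℏ (coordVec d j))
    (fun w a _ => a ∈ symbolClass (phaseVec d) (phaseScale f) w)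
    (fun j _ _ _ h => conjD_mem_symbolClass hf ℏ j h) α.exponent (operatorList d) (y := a) ha
  have hweight : ((operatorList d).map fun j =>
      (fun x : Q d × Q d => coordScale f j x.1 * brF f x) ^ α.exponent j).prod =
      fun x => f x.1.1 ^ degA α * brF f x ^ deg α := by
    funext x
    simp only [prod_map_operatorList, Finset.prod_apply, Pi.pow_apply, mul_pow,
      Finset.prod_mul_distrib, prod_coordScale_pow, Finset.prod_pow_eq_pow_sum, sum_exponent]
  rwa [hweight] at hmem

theorem isSymbol_symbOfDiff (hf : GoodF f) (m₁ : ℕ) (m₂ ℏ : ℝ) {pc : MIdx d → Q d → ℂ}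
    (hpc : ∀ α : MIdx d, deg α ≤ m₁ → pc α ∈ symbolClass (coordVec d) (coordScale f) 1)
    {a : Q d × Q d → ℂ} (ha : IsSymbol f m₂ a) :
    IsSymbol f (m₁ + m₂) (symbOfDiff d f ℏ m₁ pc a) := by
  rw [isSymbol_iff_mem_symbolClass hf.2.1] at ha ⊢
  rw [symbOfDiff_eq_sum]
  refine sum_mem fun α hα => ?_
  have hdeg : deg α ≤ m₁ := (Finset.mem_filter.1 hα).2
  have hterm := mul_mem_symbolClass (mul_mem_symbolClass (comp_fst_mem_symbolClass (hpc α hdeg))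
    (hf.inv_pow_mem_symbolClass (degA α))) (iterateAlong_conjD_mem_symbolClass hf.2.1 ℏ α ha)
  refine symbolClass_mono ?_ hterm
  have hle : (m₂ + deg α : ℝ) ≤ m₁ + m₂ := by
    rw [add_comm]
    gcongr
  refine (isBigO_of_le _ fun x => le_of_eq ?_).trans (isBigO_brF_rpow f hle)
  have hfx := zero_lt_one.trans_le (hf.2.1 x.1.1)
  have hbx := zero_lt_one.trans_le (one_le_brF f x)
  rw [Real.rpow_add hbx, Real.rpow_natCast]
  congr 1
  simp only [Pi.mul_apply, Pi.one_apply]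
  field_simp

end Symbols

section LocallyTempered

variable {X Y G : Type*} [TopologicalSpace X] [NormedAddCommGroup Y] [NormedAddCommGroup G]

/-- Functions of a parameter `x` and a variable `y` of polynomial growth in `y`, with exponent and
constant locally uniform in `x`. -/
def LocallyTempered (F : X × Y → G) : Prop :=
  ∀ x₀, ∃ M : ℕ, F =O[𝓝 x₀ ×ˢ ⊤] fun z => (1 + ‖z.2‖) ^ M

lemma isBigO_one_add_norm_pow {α : Type*} (g : α → Y) (l : Filter α) {M N : ℕ} (h : M ≤ N) :
    (fun a => (1 + ‖g a‖) ^ M) =O[l] fun a => (1 + ‖g a‖) ^ N :=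
  isBigO_of_le _ fun a => by
    rw [Real.norm_of_nonneg (by positivity), Real.norm_of_nonneg (by positivity)]
    exact pow_le_pow_right₀ (le_add_of_nonneg_right (norm_nonneg _)) h

lemma LocallyTempered.of_isBigO {F : X × Y → G} {w : X × Y → ℝ} (hw : LocallyTempered w)
    (hF : F =O[⊤] w) : LocallyTempered F := fun x₀ =>
  (hw x₀).imp fun _ h => (hF.mono le_top).trans h

lemma LocallyTempered.mul {w w' : X × Y → ℝ} (hw : LocallyTempered w) (hw' : LocallyTempered w') :
    LocallyTempered (w * w') := fun x₀ => by
  obtain ⟨M, h⟩ := hw x₀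
  obtain ⟨M', h'⟩ := hw' x₀
  refine ⟨M + M', ?_⟩
  simp only [pow_add]
  exact h.mul h'

lemma locallyTempered_comp_fst {g : X → G} (hg : Continuous g) :
    LocallyTempered fun z : X × Y => g z.1 := fun x₀ => by
  refine ⟨0, ?_⟩
  simp only [pow_zero]
  exact ((hg.tendsto x₀).isBigO_one ℝ).comp_tendsto tendsto_fst

/-- Continuous functions decaying faster than every power of the norm. -/
def IsRapidlyDecreasing (φ : Y → ℂ) : Prop :=
  Continuous φ ∧ ∀ N : ℕ, φ =O[⊤] fun y => ((1 + ‖y‖) ^ N)⁻¹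

variable {φ : Y → ℂ}

lemma LocallyTempered.exists_nhds_norm_smul_le [NormedSpace ℂ G] {F : X × Y → G}
    (hF : LocallyTempered F) (hφ : IsRapidlyDecreasing φ) (x₀ : X) (N : ℕ) :
    ∃ C, ∃ s ∈ 𝓝 x₀, ∀ x ∈ s, ∀ y, ‖φ y • F (x, y)‖ ≤ C * ((1 + ‖y‖) ^ N)⁻¹ := by
  obtain ⟨M, hM⟩ := hF x₀
  have hφ' : (fun z : X × Y => φ z.2) =O[𝓝 x₀ ×ˢ ⊤] fun z => ((1 + ‖z.2‖) ^ (N + M))⁻¹ :=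
    (hφ.2 (N + M)).comp_tendsto tendsto_top
  obtain ⟨C, hC⟩ := (hφ'.smul hM).bound
  rw [prod_top, eventually_comap] at hC
  refine ⟨C, _, hC, fun x hx y => (hx (x, y) rfl).trans_eq ?_⟩
  rw [smul_eq_mul, Real.norm_of_nonneg (by positivity), pow_add]
  field_simp

variable [MeasurableSpace Y] {μ : Measure Y} [μ.HasTemperateGrowth]

lemma integrable_inv_one_add_norm_pow :
    Integrable (fun y => ((1 + ‖y‖) ^ μ.integrablePower)⁻¹) μ := by
  simpa [Real.rpow_neg, add_nonneg] using Measure.integrable_pow_neg_integrablePower μ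

lemma LocallyTempered.integrable_mul [BorelSpace Y] {F : X × Y → ℂ}
    (hFt : LocallyTempered F) (hF : Continuous F) (hφ : IsRapidlyDecreasing φ) (x : X) :
    Integrable (fun y => F (x, y) * φ y) μ := by
  obtain ⟨C, s, hs, hC⟩ := hFt.exists_nhds_norm_smul_le hφ x μ.integrablePower
  refine (integrable_inv_one_add_norm_pow.const_mul C).mono'
    ((hF.comp (.prodMk_right x)).mul hφ.1).aestronglyMeasurable (.of_forall fun y => ?_)
  rw [mul_comm]
  exact hC x (mem_of_mem_nhds hs) y

end LocallyTempered

section ParameterIntegral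

variable {X Y : Type*} [NormedAddCommGroup X] [NormedSpace ℝ X] [NormedAddCommGroup Y]

lemma locallyTempered_of_basis {ι : Type*} [Finite ι] {G : Type*} [NormedAddCommGroup G]
    [NormedSpace ℝ G] (b : Module.Basis ι ℝ X) {A : X × Y → X →L[ℝ] G}
    (hA : ∀ i, LocallyTempered fun z => A z (b i)) :
    LocallyTempered A := fun x₀ => by
  cases nonempty_fintype ι
  obtain ⟨C, -, hC⟩ := b.exists_opNorm_le (F := G)
  choose M hM using fun i => hA i x₀
  have hle (z : X × Y) : ‖A z‖ ≤ C * ‖∑ i, ‖A z (b i)‖‖ := by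
    have hsum : 0 ≤ ∑ i, ‖A z (b i)‖ := Finset.sum_nonneg fun i _ => norm_nonneg _
    rw [Real.norm_of_nonneg hsum]
    exact hC hsum fun i =>
      Finset.single_le_sum (fun j _ => norm_nonneg (A z (b j))) (Finset.mem_univ i)
  exact ⟨∑ i, M i, (IsBigO.of_bound C (.of_forall hle)).trans <| IsBigO.fun_sum fun i hi =>
    (hM i).norm_left.trans <|
      isBigO_one_add_norm_pow _ _ (Finset.single_le_sum (fun _ _ => Nat.zero_le _) hi)⟩

variable [NormedSpace ℝ Y] [MeasurableSpace Y] [BorelSpace Y] [SecondCountableTopology Y]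
  {F : X × Y → ℂ} {φ : Y → ℂ} {μ : Measure Y} [μ.HasTemperateGrowth]

lemma hasFDerivAt_integral_mul (hF : ContDiff ℝ ∞ F) (hFt : LocallyTempered F)
    (hF't : LocallyTempered fun z => (fderiv ℝ F z).comp (.inl ℝ X Y))
    (hφ : IsRapidlyDecreasing φ) (x₀ : X) :
    HasFDerivAt (fun x => ∫ y, F (x, y) * φ y ∂μ)
      (∫ y, φ y • (fderiv ℝ F (x₀, y)).comp (.inl ℝ X Y) ∂μ) x₀ ∧
    Integrable (fun y => φ y • (fderiv ℝ F (x₀, y)).comp (.inl ℝ X Y)) μ := by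
  obtain ⟨C, s, hs, hC⟩ := hF't.exists_nhds_norm_smul_le hφ x₀ μ.integrablePower
  have hcont : Continuous fun y => φ y • (fderiv ℝ F (x₀, y)).comp (.inl ℝ X Y) :=
    hφ.1.smul <| ((hF.continuous_fderiv (by simp)).comp (.prodMk_right x₀)).clm_comp
      continuous_const
  have hbound := integrable_inv_one_add_norm_pow (μ := μ).const_mul C
  have hderiv (x : X) (y : Y) : HasFDerivAt (fun x => F (x, y) * φ y)
      (φ y • (fderiv ℝ F (x, y)).comp (.inl ℝ X Y)) x := by
    have hF' := (hF.differentiable (by simp) (x, y)).hasFDerivAt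
    exact (hF'.comp x (hasFDerivAt_prodMk_left x y)).mul_const (φ y)
  exact ⟨hasFDerivAt_integral_of_dominated_of_fderiv_le hs
    (.of_forall fun x => (hFt.integrable_mul hF.continuous hφ x).aestronglyMeasurable)
    (hFt.integrable_mul hF.continuous hφ x₀) hcont.aestronglyMeasurable
    (.of_forall fun y x hx => hC x hx y) hbound (.of_forall fun y x _ => hderiv x y),
    hbound.mono' hcont.aestronglyMeasurable (.of_forall fun y => hC x₀ (mem_of_mem_nhds hs) y)⟩

theorem dirD_integral_mul {ι : Type*} [Finite ι] (b : Module.Basis ι ℝ X) (hF : ContDiff ℝ ∞ F)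
    (hFt : LocallyTempered F) (hF't : ∀ i, LocallyTempered (dirD (b i, 0) F))
    (hφ : IsRapidlyDecreasing φ) :
    Differentiable ℝ (fun x => ∫ y, F (x, y) * φ y ∂μ) ∧
      ∀ v, dirD v (fun x => ∫ y, F (x, y) * φ y ∂μ) =
        fun x => ∫ y, dirD (v, 0) F (x, y) * φ y ∂μ := by
  have hderiv := hasFDerivAt_integral_mul (μ := μ) hF hFt (locallyTempered_of_basis b hF't) hφ
  refine ⟨fun x => (hderiv x).1.differentiableAt, fun v => funext fun x => ?_⟩
  rw [dirD, (hderiv x).1.fderiv, ContinuousLinearMap.integral_apply (hderiv x).2]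
  simp [dirD, mul_comm]

end ParameterIntegral

section RapidDecay

lemma isRapidlyDecreasing_of_pow_mul_norm_le {V : Type*} [NormedAddCommGroup V] {φ : V → ℂ}
    (hφ : Continuous φ) (h : ∀ n : ℕ, ∃ C, ∀ v, ‖v‖ ^ n * ‖φ v‖ ≤ C) : IsRapidlyDecreasing φ := by
  refine ⟨hφ, fun N => ?_⟩
  obtain ⟨C₀, h₀⟩ := h 0
  obtain ⟨C₁, h₁⟩ := h N
  refine isBigO_top.2 ⟨2 ^ (N - 1) * (C₀ + C₁), fun v => ?_⟩
  rw [Real.norm_of_nonneg (by positivity), ← div_eq_mul_inv, le_div_iff₀' (by positivity)]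
  have hadd := add_pow_le zero_le_one (norm_nonneg v) N
  calc (1 + ‖v‖) ^ N * ‖φ v‖ ≤ 2 ^ (N - 1) * (1 ^ N + ‖v‖ ^ N) * ‖φ v‖ := by gcongr
    _ = 2 ^ (N - 1) * (‖v‖ ^ 0 * ‖φ v‖ + ‖v‖ ^ N * ‖φ v‖) := by ring
    _ ≤ 2 ^ (N - 1) * (C₀ + C₁) := by
      gcongr
      exacts [h₀ v, h₁ v]

theorem isRapidlyDecreasing_fourierIntegral {V : Type*} [NormedAddCommGroup V] [NormedSpace ℝ V]
    [FiniteDimensional ℝ V] [MeasurableSpace V] [BorelSpace V] {μ : Measure V} [μ.IsAddHaarMeasure]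
    (L : V →L[ℝ] V →L[ℝ] ℝ) {c : ℝ} (hc : 0 < c) (hL : ∀ v, c * ‖v‖ ^ 2 ≤ |L v v|)
    (u : SchwartzMap V ℂ) :
    IsRapidlyDecreasing (VectorFourier.fourierIntegral Real.fourierChar μ L.toLinearMap₁₂ u) := by
  set U := VectorFourier.fourierIntegral Real.fourierChar μ L.toLinearMap₁₂ u
  refine isRapidlyDecreasing_of_pow_mul_norm_le (VectorFourier.fourierIntegral_continuous
    Real.continuous_fourierChar L.continuous₂ u.integrable) fun n => ?_
  -- On the diagonal each integration by parts gains `|L w w| ≥ c ‖w‖²` at the price of `‖w‖`.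
  obtain ⟨S, hS⟩ : ∃ S, ∀ w, |L w w| ^ n * ‖U w‖ ≤ ‖w‖ ^ n * S := by
    have h := VectorFourier.pow_mul_norm_iteratedFDeriv_fourierIntegral_le L (μ := μ) (K := 0)
      (N := ⊤) (u.smooth ⊤) (fun k n _ _ => u.integrable_pow_mul_iteratedFDeriv μ k n) (k := 0)
      (n := n) le_rfl le_top
    exact ⟨_, fun w => by simpa only [norm_iteratedFDeriv_zero, mul_assoc] using h w w⟩
  refine ⟨max 0 (S / c ^ n), fun w => ?_⟩
  obtain hw | hw := (pow_nonneg (norm_nonneg w) n).eq_or_lt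
  · simp [← hw]
  · refine le_max_of_le_right ((le_div_iff₀' (by positivity)).2 (le_of_mul_le_mul_left ?_ hw))
    calc ‖w‖ ^ n * (c ^ n * (‖w‖ ^ n * ‖U w‖)) = (c * ‖w‖ ^ 2) ^ n * ‖U w‖ := by ring
      _ ≤ |L w w| ^ n * ‖U w‖ := by
        gcongr
        exact hL w
      _ ≤ ‖w‖ ^ n * S := hS w

end RapidDecay

section Quantization

variable {d : ℕ} {f : ℝ → ℝ} {ℏ : ℝ} {a : Q d × Q d → ℂ} {u : Q d → ℂ}

instance isAddHaarMeasure_volume_Q (d : ℕ) : (volume : Measure (Q d)).IsAddHaarMeasure :=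
  inferInstanceAs ((volume : Measure ℝ).prod (volume : Measure (Fin d → ℝ))).IsAddHaarMeasure

/-- The plane wave `e^{ip·q/ℏ}` as a function of `(q, p)`. -/
def planeWave (ℏ : ℝ) (x : Q d × Q d) : ℂ :=
  ephase ℏ x.2 x.1

lemma planeWave_eq_cexp (ℏ : ℝ) (x : Q d × Q d) :
    planeWave ℏ x = Complex.exp ((qdotCLM d x.2 x.1 / ℏ : ℝ) * Complex.I) := by
  rw [planeWave, ephase, qdotCLM_apply]
  push_cast
  ring_nf

lemma norm_planeWave (ℏ : ℝ) (x : Q d × Q d) : ‖planeWave ℏ x‖ = 1 := by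
  rw [planeWave_eq_cexp, Complex.norm_exp_ofReal_mul_I]

lemma contDiff_planeWave (d : ℕ) (ℏ : ℝ) : ContDiff ℝ ∞ (planeWave (d := d) ℏ) := by
  have hdot : ContDiff ℝ ∞ fun x : Q d × Q d => qdotCLM d x.2 x.1 / ℏ :=
    (((qdotCLM d).contDiff.comp contDiff_snd).clm_apply contDiff_fst).div_const ℏ
  rw [funext (planeWave_eq_cexp ℏ)]
  exact ((Complex.ofRealCLM.contDiff.comp hdot).mul contDiff_const).cexp

lemma dirD_planeWave (ℏ : ℝ) (v : Q d) :
    dirD (v, 0) (planeWave ℏ) = (fun x => qdot x.2 v / ℏ * Complex.I) * planeWave ℏ := by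
  funext x
  have hdot : HasFDerivAt (fun x : Q d × Q d => qdotCLM d x.2 x.1) _ x :=
    (qdotCLM d).hasFDerivAt_of_bilinear hasFDerivAt_snd hasFDerivAt_fst
  have hexp := ((Complex.ofRealCLM.hasFDerivAt.comp x (hdot.mul_const ℏ⁻¹)).mul_const
    Complex.I).cexp
  have hwave := hexp.congr_of_eventuallyEq (f₁ := planeWave ℏ) <| .of_forall fun y => by
    simp [planeWave_eq_cexp, div_eq_mul_inv]
  rw [dirD, hwave.fderiv]
  simp [planeWave_eq_cexp, qdotCLM_apply, div_eq_mul_inv]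
  ring

lemma dirD_mul_planeWave (hℏ : ℏ ≠ 0) (ha : Differentiable ℝ a) (v : Q d) :
    ((ℏ : ℂ) * -Complex.I) • dirD (v, 0) (a * planeWave ℏ) = conjD ℏ v a * planeWave ℏ := by
  rw [dirD_mul _ ha ((contDiff_planeWave d ℏ).differentiable (by simp)), dirD_planeWave]
  have hℏ' : (ℏ : ℂ) ≠ 0 := Complex.ofReal_ne_zero.2 hℏ
  funext x
  simp only [conjD, Pi.smul_apply, Pi.add_apply, Pi.mul_apply, smul_eq_mul]
  field_simp
  linear_combination -(a x * planeWave ℏ x * qdot x.2 v) * Complex.I_sq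

/-- The semiclassical Fourier transform `∫ e^{-ip·q/ℏ} u(q) dq`, without normalization. -/
def semiclassicalFourier (ℏ : ℝ) (u : Q d → ℂ) (p : Q d) : ℂ :=
  ∫ q, ephase ℏ p (-q) * u q

lemma Op_one_eq (ℏ : ℝ) (a : Q d × Q d → ℂ) (u : Q d → ℂ) :
    Op ℏ 1 a u = (((2 * Real.pi * ℏ) ^ (d + 1) : ℝ)⁻¹ : ℂ) •
      fun q => ∫ p, (a * planeWave ℏ : Q d × Q d → ℂ) (q, p) * semiclassicalFourier ℏ u p := by
  funext q
  have hphase (p q' : Q d) : ephase ℏ p (q - q') = ephase ℏ p q * ephase ℏ p (-q') := by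
    simp only [ephase, ← Complex.exp_add, ← qdotCLM_apply, map_sub, map_neg]
    push_cast
    ring_nf
  simp only [Op, semiclassicalFourier, planeWave, hphase, ← integral_const_mul, Pi.mul_apply,
    Pi.smul_apply, one_smul, sub_self, zero_smul, add_zero, mul_assoc, Complex.real_smul,
    smul_eq_mul, Complex.ofReal_inv]

lemma sq_norm_le_qdot_self (q : Q d) : ‖q‖ ^ 2 ≤ qdot q q := by
  have hsum : 0 ≤ ∑ i, q.2 i * q.2 i := Finset.sum_nonneg fun i _ => mul_self_nonneg _
  have hqdot : 0 ≤ qdot q q := add_nonneg (mul_self_nonneg _) hsum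
  refine (Real.le_sqrt (norm_nonneg q) hqdot).1 (max_le ?_ ?_)
  · exact Real.abs_le_sqrt (by rw [qdot]; linarith)
  · refine (pi_norm_le_iff_of_nonneg (Real.sqrt_nonneg _)).2 fun i => Real.abs_le_sqrt ?_
    have hi := Finset.single_le_sum (fun k _ => mul_self_nonneg (q.2 k)) (Finset.mem_univ i)
    rw [qdot]
    linarith [mul_self_nonneg q.1]

lemma isRapidlyDecreasing_semiclassicalFourier (hℏ : ℏ ≠ 0) (u : SchwartzMap (Q d) ℂ) :
    IsRapidlyDecreasing (semiclassicalFourier ℏ u) := by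
  let L : Q d →L[ℝ] Q d →L[ℝ] ℝ := (2 * Real.pi * ℏ)⁻¹ • qdotCLM d
  have hL (q p : Q d) : L q p = (2 * Real.pi * ℏ)⁻¹ * qdot q p := by simp [L, qdotCLM_apply]
  have hfourier : semiclassicalFourier ℏ u =
      VectorFourier.fourierIntegral Real.fourierChar volume L.toLinearMap₁₂ u := by
    funext p
    refine integral_congr_ae (.of_forall fun q => ?_)
    change ephase ℏ p (-q) * u q = Real.fourierChar (-L q p) • u q
    rw [Circle.smul_def, Real.fourierChar_apply, hL, smul_eq_mul, ephase, ← qdotCLM_apply, map_neg,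
      qdotCLM_apply, qdot_comm]
    push_cast
    congr 2
    field_simp
  rw [hfourier]
  refine isRapidlyDecreasing_fourierIntegral L (c := |(2 * Real.pi * ℏ)⁻¹|)
    (abs_pos.2 (by positivity)) (fun q => ?_) u
  rw [hL, abs_mul]
  gcongr
  exact (sq_norm_le_qdot_self q).trans (le_abs_self _)

lemma brF_le (hf : ∀ r, 1 ≤ f r) (x : Q d × Q d) : brF f x ≤ √(d + 1) * (1 + ‖x.2‖) := by
  have hρ : x.2.1 ^ 2 ≤ ‖x.2‖ ^ 2 := sq_le_sq.2 (by simpa using norm_fst_le x.2)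
  have hη (i : Fin d) : (x.2.2 i / f x.1.1) ^ 2 ≤ ‖x.2‖ ^ 2 := by
    have hi : |x.2.2 i| ≤ ‖x.2‖ := (norm_le_pi_norm x.2.2 i).trans (norm_snd_le x.2)
    rw [sq_le_sq, abs_div, abs_norm]
    exact (div_le_self (abs_nonneg _) ((hf x.1.1).trans (le_abs_self _))).trans hi
  have hsum : ∑ i, (x.2.2 i / f x.1.1) ^ 2 ≤ d * ‖x.2‖ ^ 2 := by
    simpa using Finset.sum_le_sum fun i (_ : i ∈ Finset.univ) => hη i
  refine Real.sqrt_le_iff.2 ⟨by positivity, ?_⟩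
  rw [mul_pow, Real.sq_sqrt (by positivity)]
  have hd : 0 ≤ d * (1 + 2 * ‖x.2‖) := by positivity
  nlinarith [norm_nonneg x.2]

lemma locallyTempered_brF_rpow (hf : ∀ r, 1 ≤ f r) (m : ℝ) :
    LocallyTempered fun x : Q d × Q d => brF f x ^ m := by
  have hbrF : brF f =O[⊤] fun x : Q d × Q d => 1 + ‖x.2‖ :=
    .of_bound √(d + 1) <| .of_forall fun x => by
      rw [Real.norm_of_nonneg (zero_le_one.trans (one_le_brF f x)),
        Real.norm_of_nonneg (by positivity)]
      exact brF_le hf x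
  refine fun x₀ => ⟨⌈m⌉₊, ((isBigO_brF_rpow f (Nat.le_ceil m)).trans ?_).mono le_top⟩
  simpa only [Real.rpow_natCast] using hbrF.pow ⌈m⌉₊

lemma continuous_coordScale (hf : Continuous f) (j : Coord d) : Continuous (coordScale f j) := by
  rcases j with _ | _
  · exact continuous_const
  · exact hf.comp continuous_fst

/-- Symbols of some weight of locally uniform polynomial growth in the momentum: the class on which
the operators `p_j + ℏD_j` act and for which `Op` can be differentiated under the integral sign. -/
def IsTemperedSymbol (f : ℝ → ℝ) (a : Q d × Q d → ℂ) : Prop :=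
  ∃ w, LocallyTempered w ∧ a ∈ symbolClass (phaseVec d) (phaseScale f) w

lemma IsSymbol.isTemperedSymbol (hf : ∀ r, 1 ≤ f r) {m : ℝ} (ha : IsSymbol f m a) :
    IsTemperedSymbol f a :=
  ⟨_, locallyTempered_brF_rpow hf m, (isSymbol_iff_mem_symbolClass hf).1 ha⟩

lemma IsTemperedSymbol.conjD (hf : Continuous f) (hf1 : ∀ r, 1 ≤ f r) (ℏ : ℝ)
    (ha : IsTemperedSymbol f a) (j : Coord d) : IsTemperedSymbol f (conjD ℏ (coordVec d j) a) :=
  let ⟨_, hw, ha⟩ := ha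
  have hbrF : LocallyTempered (brF f) := by
    simpa only [Real.rpow_one] using locallyTempered_brF_rpow hf1 1
  have hscale := locallyTempered_comp_fst (continuous_coordScale hf j)
  ⟨_, hw.mul (hscale.mul hbrF), conjD_mem_symbolClass hf1 ℏ j ha⟩

lemma IsTemperedSymbol.contDiff (ha : IsTemperedSymbol f a) : ContDiff ℝ ∞ a :=
  let ⟨_, _, ha⟩ := ha
  contDiff_of_mem_symbolClass ha

lemma IsTemperedSymbol.locallyTempered_mul_planeWave (ha : IsTemperedSymbol f a) (ℏ : ℝ) :
    LocallyTempered (a * planeWave ℏ) := by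
  obtain ⟨w, hw, ha⟩ := ha
  refine hw.of_isBigO ((isBigO_of_le _ fun x => ?_).trans (isBigO_of_mem_symbolClass ha))
  rw [Pi.mul_apply, norm_mul, norm_planeWave, mul_one]

/-- The basis of `∂_r` and the `∂_{θ_i}`. -/
def coordBasis (d : ℕ) : Module.Basis (Coord d) ℝ (Q d) :=
  (Module.Basis.singleton Unit ℝ).prod (Pi.basisFun ℝ (Fin d))

lemma coordBasis_apply (j : Coord d) : coordBasis d j = coordVec d j := by
  rcases j with _ | i <;> simp [coordBasis, coordVec, eR, eTh]

theorem dirD_Op (hf : Continuous f) (hf1 : ∀ r, 1 ≤ f r) (hℏ : ℏ ≠ 0)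
    (ha : IsTemperedSymbol f a) (hu : IsRapidlyDecreasing (semiclassicalFourier ℏ u)) :
    Differentiable ℝ (Op ℏ 1 a u) ∧ ∀ j,
      ((ℏ : ℂ) * -Complex.I) • dirD (coordVec d j) (Op ℏ 1 a u) =
        Op ℏ 1 (conjD ℏ (coordVec d j) a) u := by
  have hc : (ℏ : ℂ) * -Complex.I ≠ 0 := by simpa using hℏ
  have hwave (j : Coord d) : dirD (coordVec d j, 0) (a * planeWave ℏ) =
      ((ℏ : ℂ) * -Complex.I)⁻¹ • (conjD ℏ (coordVec d j) a * planeWave ℏ) := by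
    rw [← dirD_mul_planeWave hℏ (ha.contDiff.differentiable (by simp)), inv_smul_smul₀ hc]
  have hdir := dirD_integral_mul (F := a * planeWave ℏ) (μ := volume) (coordBasis d)
    (ha.contDiff.mul (contDiff_planeWave d ℏ)) (ha.locallyTempered_mul_planeWave ℏ)
    (fun j x₀ => by
      rw [coordBasis_apply, hwave]
      exact ((ha.conjD hf hf1 ℏ j).locallyTempered_mul_planeWave ℏ x₀).imp fun _ h =>
        h.const_smul_left _) hu
  rw [Op_one_eq]
  refine ⟨hdir.1.const_smul _, fun j => ?_⟩
  rw [dirD_const_smul, hdir.2, smul_comm, Op_one_eq, hwave]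
  congr 1
  funext q
  simp only [Pi.smul_apply, smul_mul_assoc, integral_smul, smul_inv_smul₀ hc]

end Quantization

section Composition

variable {d : ℕ} {f : ℝ → ℝ} {ℏ : ℝ} {a : Q d × Q d → ℂ} {u : Q d → ℂ}

lemma iterate_hbarDr_Op (hf : Continuous f) (hf1 : ∀ r, 1 ≤ f r) (hℏ : ℏ ≠ 0)
    (ha : IsTemperedSymbol f a) (hu : IsRapidlyDecreasing (semiclassicalFourier ℏ u)) (k : ℕ) :
    IsTemperedSymbol f ((conjD ℏ (eR d))^[k] a) ∧
      (hbarDr d ℏ)^[k] (Op ℏ 1 a u) = Op ℏ 1 ((conjD ℏ (eR d))^[k] a) u := by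
  refine iterate_rel (M := Unit) (τ := 1) (m := 1)
    (fun _ F a => IsTemperedSymbol f a ∧ F = Op ℏ 1 a u) ?_ k ⟨ha, rfl⟩
  rintro - _ a ⟨ha, rfl⟩
  exact ⟨ha.conjD hf hf1 ℏ (Sum.inl ()), (dirD_Op hf hf1 hℏ ha hu).2 (Sum.inl ())⟩

lemma dirD_eTh_mul (i : Fin d) {h : ℝ → ℂ} {F : Q d → ℂ} (hh : Differentiable ℝ h)
    (hF : Differentiable ℝ F) :
    dirD (eTh d i) ((fun q => h q.1) * F) = (fun q => h q.1) * dirD (eTh d i) F := by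
  have hradial : dirD (eTh d i) (fun q : Q d => h q.1) = 0 := by
    refine (dirD_comp_clm (eTh d i) (.fst ℝ ℝ (Fin d → ℝ)) hh).trans ?_
    rw [show ContinuousLinearMap.fst ℝ ℝ (Fin d → ℝ) (eTh d i) = 0 from rfl, dirD_zero_left]
    rfl
  rw [dirD_mul _ (g := fun q : Q d => h q.1) (hh.comp differentiable_fst) hF, hradial, zero_mul,
    add_zero]

lemma iterateAlong_hbarDθ_Op (hf : Differentiable ℝ f) (hf1 : ∀ r, 1 ≤ f r) (hℏ : ℏ ≠ 0)
    (ha : IsTemperedSymbol f a) (hu : IsRapidlyDecreasing (semiclassicalFourier ℏ u))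
    (n : Fin d → ℕ) :
    IsTemperedSymbol f (iterateAlong (fun i => conjD ℏ (eTh d i)) n (List.finRange d) a) ∧
      iterateAlong (hbarDθ d f ℏ) n (List.finRange d) (Op ℏ 1 a u) =
        (fun q => ((f q.1 ^ ∑ i, n i : ℝ) : ℂ)⁻¹) *
          Op ℏ 1 (iterateAlong (fun i => conjD ℏ (eTh d i)) n (List.finRange d) a) u := by
  have hne (r : ℝ) : (f r : ℂ) ≠ 0 := Complex.ofReal_ne_zero.2 (zero_lt_one.trans_le (hf1 r)).ne'
  have hinv : Differentiable ℝ fun r => (f r : ℂ)⁻¹ :=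
    (Complex.ofRealCLM.differentiable.comp hf).inv hne
  let R (h : ℝ → ℂ) (F : Q d → ℂ) (a : Q d × Q d → ℂ) : Prop :=
    Differentiable ℝ h ∧ IsTemperedSymbol f a ∧ F = (fun q => h q.1) * Op ℏ 1 a u
  have hstep (i : Fin d) (h : ℝ → ℂ) (F : Q d → ℂ) (a : Q d × Q d → ℂ) (hR : R h F a) :
      R (h * fun r => (f r : ℂ)⁻¹) (hbarDθ d f ℏ i F) (conjD ℏ (eTh d i) a) := by
    obtain ⟨hh, ha, rfl⟩ := hR
    obtain ⟨hdiff, hdir⟩ := dirD_Op hf.continuous hf1 hℏ ha hu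
    refine ⟨hh.mul hinv, ha.conjD hf.continuous hf1 ℏ (Sum.inr i), funext fun q => ?_⟩
    have hq := congrFun (hdir (Sum.inr i)) q
    simp only [coordVec, Sum.elim_inr, Pi.smul_apply, smul_eq_mul] at hq
    simp only [hbarDθ, dirD_eTh_mul i hh hdiff, Pi.mul_apply, ← hq]
    ring
  have hR := iterateAlong_rel R hstep n (List.finRange d) (m := 1) (x := Op ℏ 1 a u) (y := a)
    ⟨differentiable_const 1, ha, (one_mul _).symm⟩
  refine ⟨hR.2.1, hR.2.2.trans ?_⟩
  congr 1
  funext q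
  simp [← List.ofFn_eq_map, List.prod_ofFn, Finset.prod_pow_eq_pow_sum]

lemma diffOp_eq_sum (f : ℝ → ℝ) (ℏ : ℝ) (m₁ : ℕ) (pc : MIdx d → Q d → ℂ) (u : Q d → ℂ) :
    diffOp d f ℏ m₁ pc u = ∑ α ∈ idxSet d m₁,
      pc α * iterateAlong (hbarDθ d f ℏ) α.2 (List.finRange d) ((hbarDr d ℏ)^[α.1] u) := by
  funext q
  simp [diffOp, iterateAlong]

lemma Op_one_sum_mul {κ : Type*} {s : Finset κ} (g : κ → Q d → ℂ) {c : κ → Q d × Q d → ℂ}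
    (hc : ∀ k ∈ s, IsTemperedSymbol f (c k))
    (hu : IsRapidlyDecreasing (semiclassicalFourier ℏ u)) :
    Op ℏ 1 (∑ k ∈ s, (fun x => g k x.1) * c k) u = ∑ k ∈ s, g k * Op ℏ 1 (c k) u := by
  have hint (k : κ) (hk : k ∈ s) (q : Q d) : Integrable fun p =>
      (c k * planeWave ℏ : Q d × Q d → ℂ) (q, p) * semiclassicalFourier ℏ u p :=
    ((hc k hk).locallyTempered_mul_planeWave ℏ).integrable_mul
      ((hc k hk).contDiff.mul (contDiff_planeWave d ℏ)).continuous hu q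
  funext q
  have hsum := integral_finsetSum s fun k hk => (hint k hk q).const_mul (g k q)
  simp only [integral_const_mul] at hsum
  simp only [Op_one_eq, Finset.sum_apply, Pi.smul_apply, Pi.mul_apply, smul_eq_mul,
    mul_left_comm (g _ q), ← Finset.mul_sum, Finset.sum_mul] at hsum ⊢
  rw [← hsum]
  simp only [mul_assoc, mul_left_comm (g _ q)]

theorem diffOp_Op (hf : Differentiable ℝ f) (hf1 : ∀ r, 1 ≤ f r) (hℏ : ℏ ≠ 0) (m₁ : ℕ)
    (pc : MIdx d → Q d → ℂ) (ha : IsTemperedSymbol f a)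
    (hu : IsRapidlyDecreasing (semiclassicalFourier ℏ u)) :
    diffOp d f ℏ m₁ pc (Op ℏ 1 a u) = Op ℏ 1 (symbOfDiff d f ℏ m₁ pc a) u := by
  let c (α : MIdx d) := iterateAlong (fun j => conjD ℏ (coordVec d j)) α.exponent (operatorList d) a
  have hc (α : MIdx d) : IsTemperedSymbol f (c α) ∧
      iterateAlong (hbarDθ d f ℏ) α.2 (List.finRange d) ((hbarDr d ℏ)^[α.1] (Op ℏ 1 a u)) =
        (fun q => ((f q.1 ^ degA α : ℝ) : ℂ)⁻¹) * Op ℏ 1 (c α) u := by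
    have hcα : c α = iterateAlong (fun i => conjD ℏ (eTh d i)) α.2 (List.finRange d)
        ((conjD ℏ (eR d))^[α.1] a) := by
      simp [c, iterateAlong, operatorList, List.foldr_map, coordVec, MIdx.exponent]
    obtain ⟨har, hr⟩ := iterate_hbarDr_Op hf.continuous hf1 hℏ ha hu α.1
    obtain ⟨haθ, hθ⟩ := iterateAlong_hbarDθ_Op hf hf1 hℏ har hu α.2
    rw [hr, hcα]
    exact ⟨haθ, hθ⟩
  rw [symbOfDiff_eq_sum, diffOp_eq_sum]
  refine .trans ?_ (Op_one_sum_mul (fun α q => pc α q * ((f q.1 ^ degA α : ℝ) : ℂ)⁻¹)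
    (fun α _ => (hc α).1) hu).symm
  refine Finset.sum_congr rfl fun α _ => ?_
  rw [(hc α).2, ← mul_assoc]
  rfl

lemma mem_symbolClass_coord_of_bounded (hf : ∀ r, 1 ≤ f r) {g : Q d → ℂ} (hg : ContDiff ℝ ∞ g)
    (hbound : ∀ γ : MIdx d, ∃ C : ℝ, ∀ q, f q.1 ^ (-(degA γ : ℝ)) * ‖mderiv1 γ g q‖ ≤ C) :
    g ∈ symbolClass (coordVec d) (coordScale f) 1 := by
  refine mem_symbolClass_coord_iff.2 ⟨hg, fun γ => ?_⟩
  refine isBigO_top.2 ((hbound γ).imp fun C hC q => ?_)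
  have hfq := zero_lt_one.trans_le (hf q.1)
  have hCq := hC q
  rw [Real.rpow_neg hfq.le, Real.rpow_natCast, inv_mul_le_iff₀' (by positivity)] at hCq
  simpa [abs_of_pos hfq] using hCq

end Composition

theorem statement14_general (d : ℕ) (f : ℝ → ℝ) (hf : GoodF f) (m₁ : ℕ) (m₂ : ℝ) (ℏ : ℝ)
    (hℏ : ℏ ≠ 0) (pc : MIdx d → Q d → ℂ)
    (hpc : ∀ α : MIdx d, deg α ≤ m₁ → ContDiff ℝ (⊤ : ℕ∞) (pc α) ∧
      ∀ γ : MIdx d, ∃ C : ℝ, ∀ q : Q d,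
        f q.1 ^ (-(degA γ : ℝ)) * ‖mderiv1 γ (pc α) q‖ ≤ C)
    (a : Q d × Q d → ℂ) (ha : IsSymbol f m₂ a) :
    IsSymbol f ((m₁ : ℝ) + m₂) (symbOfDiff d f ℏ m₁ pc a) ∧
    ∀ u : SchwartzMap (Q d) ℂ,
      diffOp d f ℏ m₁ pc (Op ℏ 1 a u) = Op ℏ 1 (symbOfDiff d f ℏ m₁ pc a) u :=
  ⟨isSymbol_symbOfDiff hf m₁ m₂ ℏ
      (fun α hα => mem_symbolClass_coord_of_bounded hf.2.1 (hpc α hα).1 (hpc α hα).2) ha,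
    fun u => diffOp_Op (hf.1.differentiable (by simp)) hf.2.1 hℏ m₁ pc
      (ha.isTemperedSymbol hf.2.1) (isRapidlyDecreasing_semiclassicalFourier hℏ u)⟩

/-- composition of a differential operator with `Op^1_ℏ`. -/
theorem statement14 (d : ℕ) (f : ℝ → ℝ) (hf : GoodF f) (m₁ : ℕ) (m₂ : ℝ) (ℏ : ℝ)
    (hℏ : ℏ ∈ Set.Ioc (0 : ℝ) 1) (pc : MIdx d → Q d → ℂ)
    (hpc : ∀ α : MIdx d, ContDiff ℝ (⊤ : ℕ∞) (pc α) ∧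
      ∀ γ : MIdx d, ∃ C : ℝ, ∀ q : Q d,
        f q.1 ^ (-(degA γ : ℝ)) * ‖mderiv1 γ (pc α) q‖ ≤ C)
    (a : Q d × Q d → ℂ) (ha : IsSymbol f m₂ a) :
    IsSymbol f ((m₁ : ℝ) + m₂) (symbOfDiff d f ℏ m₁ pc a) ∧
    ∀ u : Q d → ℂ, IsCc u → ∀ q : Q d,
      diffOp d f ℏ m₁ pc (Op ℏ 1 a u) q = Op ℏ 1 (symbOfDiff d f ℏ m₁ pc a) u q := by
  obtain ⟨hb, hOp⟩ := statement14_general d f hf m₁ m₂ ℏ hℏ.1.ne' pc (fun α _ => hpc α) a ha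
  exact ⟨hb, fun u hu q => congrFun (hOp (hu.2.toSchwartzMap hu.1)) q⟩

end
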